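/- A quasi-identity in the language {∧, ∨, *, ⁺, 0, 1} is admissible in the four-element double Stone algebra dS (equivalently, admissible in the variety of double Stone algebras) if and only if it is valid in the eight-element product algebra 2 × dS. -/

import Mathlib

/-!
Write `F` for the algebra of `L`-terms modulo the identities of `dS`; a quasi-identity is admissible
in `dS` iff it is valid in `F`. So it is enough that `F` and `2 × dS` have the same quasi-identities.

* Validity passes from `2 × dS` to `F`. An evaluation `F → dS` under an assignment `w` can be
  paired with an evaluation `F → 2`, which exists because `2` embeds in `dS` as `{0, 1}`
  (`twoIncl`). The pair is a homomorphism `F → 2 × dS` whose second coordinate is the given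
  evaluation, so `F` is separated by homomorphisms into `2 × dS`.
* Validity passes from `F` to `2 × dS`, because `2 × dS` embeds in `F` (in fact in the free algebra
  on `x, y`), by `embTerm`. Let `z = x* ∨ x⁺⁺ ∨ y* ∨ y⁺⁺`. In `dS` it is `0` when both `x` and `y`
  lie in `{a, b}`, and `1` otherwise. The embedding sends `(1, 0)` to `z`, `(0, a)` to
  `z* ∧ (x ∧ y)` and `(0, b)` to `z* ∧ (x ∨ y)`. At each assignment to `x, y` this is a homomorphism
  `2 × dS → dS` (`embVal`): where `z = 1` it is the first projection followed by `2 ↪ dS`, and where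
  `z = 0` it is the second projection followed by the endomorphism `a ↦ x ∧ y`, `b ↦ x ∨ y`. The two
  assignments `(0, 0)` and `(a, b)` already separate the points of `2 × dS`.
-/

/-- Terms in the language {∧, ∨, *, ⁺, 0, 1} over a set `V` of variables. -/
inductive DSTerm (V : Type) : Type
  | var : V → DSTerm V
  | meet : DSTerm V → DSTerm V → DSTerm V
  | join : DSTerm V → DSTerm V → DSTerm V
  | star : DSTerm V → DSTerm V   -- pseudocomplement *
  | plus : DSTerm V → DSTerm V   -- dual pseudocomplement ⁺
  | zero : DSTerm V
  | one : DSTerm V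

/-- An algebra in the language {∧, ∨, *, ⁺, 0, 1}. -/
structure DSAlg where
  carrier : Type
  meet : carrier → carrier → carrier
  join : carrier → carrier → carrier
  star : carrier → carrier
  plus : carrier → carrier
  zero : carrier
  one : carrier

/-- Evaluation of a term in an algebra under an assignment of the variables. -/
def DSTerm.eval {V : Type} (A : DSAlg) (v : V → A.carrier) : DSTerm V → A.carrier
  | .var x => v x
  | .meet t s => A.meet (t.eval A v) (s.eval A v)
  | .join t s => A.join (t.eval A v) (s.eval A v)
  | .star t => A.star (t.eval A v)
  | .plus t => A.plus (t.eval A v)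
  | .zero => A.zero
  | .one => A.one

/-- Substitution of terms for variables. -/
def DSTerm.subst {V W : Type} (s : V → DSTerm W) : DSTerm V → DSTerm W
  | .var x => s x
  | .meet t u => .meet (t.subst s) (u.subst s)
  | .join t u => .join (t.subst s) (u.subst s)
  | .star t => .star (t.subst s)
  | .plus t => .plus (t.subst s)
  | .zero => .zero
  | .one => .one

/-- Validity of the identity `φ ≈ ψ` in the algebra `A`. -/
def DSIdValid {V : Type} (A : DSAlg) (φ ψ : DSTerm V) : Prop :=
  ∀ v : V → A.carrier, φ.eval A v = ψ.eval A v

/-- Validity of the quasi-identity `Γ ⇒ φ ≈ ψ` in the algebra `A`. -/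
def DSQValid (A : DSAlg) (Γ : List (DSTerm ℕ × DSTerm ℕ)) (φ ψ : DSTerm ℕ) : Prop :=
  ∀ v : ℕ → A.carrier,
    (∀ p ∈ Γ, p.1.eval A v = p.2.eval A v) → φ.eval A v = ψ.eval A v

/-- Admissibility of the quasi-identity `Γ ⇒ φ ≈ ψ` in the algebra `M`. -/
def DSAdmissible (M : DSAlg) (Γ : List (DSTerm ℕ × DSTerm ℕ)) (φ ψ : DSTerm ℕ) : Prop :=
  ∀ s : ℕ → DSTerm ℕ,
    (∀ p ∈ Γ, DSIdValid M (p.1.subst s) (p.2.subst s)) →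
    DSIdValid M (φ.subst s) (ψ.subst s)

/-- dS: the four-element double Stone algebra on the chain 0 < a < b < 1
(as `Fin 4`), with 0* = 1, x* = 0 for x ≠ 0, 1⁺ = 0, x⁺ = 1 for x ≠ 1. -/
def dSalg : DSAlg := ⟨Fin 4, min, max, ![3, 0, 0, 0], ![3, 3, 3, 0], 0, 3⟩

/-- 2: the two-element double Stone algebra on {0, 1}. -/
def twoDS : DSAlg := ⟨Fin 2, min, max, ![1, 0], ![1, 0], 0, 1⟩

/-- The product of two algebras with componentwise operations. -/
def prodDS (A B : DSAlg) : DSAlg where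
  carrier := A.carrier × B.carrier
  meet := fun x y => (A.meet x.1 y.1, B.meet x.2 y.2)
  join := fun x y => (A.join x.1 y.1, B.join x.2 y.2)
  star := fun x => (A.star x.1, B.star x.2)
  plus := fun x => (A.plus x.1, B.plus x.2)
  zero := (A.zero, B.zero)
  one := (A.one, B.one)

/-- Homomorphisms of algebras in the language `{∧, ∨, *, ⁺, 0, 1}`. -/
structure IsDSHom (A B : DSAlg) (h : A.carrier → B.carrier) : Prop where
  meet : ∀ x y, h (A.meet x y) = B.meet (h x) (h y)
  join : ∀ x y, h (A.join x y) = B.join (h x) (h y)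
  star : ∀ x, h (A.star x) = B.star (h x)
  plus : ∀ x, h (A.plus x) = B.plus (h x)
  zero : h A.zero = B.zero
  one : h A.one = B.one

theorem IsDSHom.map_eval {A B : DSAlg} {h : A.carrier → B.carrier} (hh : IsDSHom A B h)
    {V : Type} (v : V → A.carrier) (t : DSTerm V) :
    h (t.eval A v) = t.eval B (fun x => h (v x)) := by
  induction t with
  | var x => rfl
  | meet t s iht ihs => simp only [DSTerm.eval, hh.meet, iht, ihs]
  | join t s iht ihs => simp only [DSTerm.eval, hh.join, iht, ihs]
  | star t ih => simp only [DSTerm.eval, hh.star, ih]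
  | plus t ih => simp only [DSTerm.eval, hh.plus, ih]
  | zero => exact hh.zero
  | one => exact hh.one

theorem eval_subst {V W : Type} (A : DSAlg) (s : V → DSTerm W) (w : W → A.carrier)
    (t : DSTerm V) :
    (t.subst s).eval A w = t.eval A (fun x => (s x).eval A w) := by
  induction t with
  | var x => rfl
  | meet t s iht ihs => simp only [DSTerm.subst, DSTerm.eval, iht, ihs]
  | join t s iht ihs => simp only [DSTerm.subst, DSTerm.eval, iht, ihs]
  | star t ih => simp only [DSTerm.subst, DSTerm.eval, ih]
  | plus t ih => simp only [DSTerm.subst, DSTerm.eval, ih]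
  | zero => rfl
  | one => rfl

theorem isDSHom_fst (A B : DSAlg) : IsDSHom (prodDS A B) A Prod.fst :=
  ⟨fun _ _ => rfl, fun _ _ => rfl, fun _ => rfl, fun _ => rfl, rfl, rfl⟩

theorem isDSHom_snd (A B : DSAlg) : IsDSHom (prodDS A B) B Prod.snd :=
  ⟨fun _ _ => rfl, fun _ _ => rfl, fun _ => rfl, fun _ => rfl, rfl, rfl⟩

/-- The embedding of `2` into `dS` with image `{0, 1}`. -/
def twoIncl : Fin 2 → Fin 4 := ![0, 3]

theorem isDSHom_twoIncl : IsDSHom twoDS dSalg twoIncl where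
  meet := show ∀ x y : Fin 2, twoIncl (min x y) = min (twoIncl x) (twoIncl y) by decide
  join := show ∀ x y : Fin 2, twoIncl (max x y) = max (twoIncl x) (twoIncl y) by decide
  star := show ∀ x : Fin 2, twoIncl (![1, 0] x) = ![3, 0, 0, 0] (twoIncl x) by decide
  plus := show ∀ x : Fin 2, twoIncl (![1, 0] x) = ![3, 3, 3, 0] (twoIncl x) by decide
  zero := rfl
  one := rfl

theorem twoIncl_injective : Function.Injective twoIncl := by decide

/-- The term `z = x* ∨ x⁺⁺ ∨ y* ∨ y⁺⁺`, where `x, y` are the variables `0, 1`. -/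
def zTerm : DSTerm ℕ :=
  .join (.join (.star (.var 0)) (.plus (.plus (.var 0))))
    (.join (.star (.var 1)) (.plus (.plus (.var 1))))

/-- The embedding of `2 × dS` into the free algebra: `(i, c)` goes to `(z ∧ i) ∨ (z* ∧ p c)`, where
`p 0 = 0`, `p a = x ∧ y`, `p b = x ∨ y`, `p 1 = 1`. -/
def embTerm (c : Fin 2 × Fin 4) : DSTerm ℕ :=
  .join (.meet zTerm (![.zero, .one] c.1))
    (.meet (.star zTerm)
      (![.zero, .meet (.var 0) (.var 1), .join (.var 0) (.var 1), .one] c.2))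

/-- The value in `dS` of `embTerm c` when `x` and `y` take the values `p` and `q`. Here `1, 2 : Fin 4`
are the elements `a, b` of `dS`. -/
def embVal (p q : Fin 4) (c : Fin 2 × Fin 4) : Fin 4 :=
  if (p = 1 ∨ p = 2) ∧ (q = 1 ∨ q = 2) then ![0, min p q, max p q, 3] c.2 else twoIncl c.1

theorem eval_embTerm (w : ℕ → Fin 4) (c : Fin 2 × Fin 4) :
    (embTerm c).eval dSalg w = embVal (w 0) (w 1) c := by
  have key : ∀ p q : Fin 4, ∀ i : Fin 2, ∀ d : Fin 4,
      (embTerm (i, d)).eval dSalg (fun n => if n = 0 then p else q) = embVal p q (i, d) := by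
    intro p q i d
    fin_cases p <;> fin_cases q <;> fin_cases i <;> fin_cases d <;> rfl
  obtain ⟨i, d⟩ := c
  rw [← key]
  fin_cases i <;> fin_cases d <;> rfl

theorem isDSHom_embVal (p q : Fin 4) : IsDSHom (prodDS twoDS dSalg) dSalg (embVal p q) where
  meet := by
    have h : ∀ p q : Fin 4, ∀ x y : Fin 2 × Fin 4,
        embVal p q (min x.1 y.1, min x.2 y.2) = min (embVal p q x) (embVal p q y) := by
      decide +kernel
    exact h p q
  join := by
    have h : ∀ p q : Fin 4, ∀ x y : Fin 2 × Fin 4,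
        embVal p q (max x.1 y.1, max x.2 y.2) = max (embVal p q x) (embVal p q y) := by
      decide +kernel
    exact h p q
  star := by
    have h : ∀ p q : Fin 4, ∀ x : Fin 2 × Fin 4,
        embVal p q (![1, 0] x.1, ![3, 0, 0, 0] x.2) = ![3, 0, 0, 0] (embVal p q x) := by
      decide +kernel
    exact h p q
  plus := by
    have h : ∀ p q : Fin 4, ∀ x : Fin 2 × Fin 4,
        embVal p q (![1, 0] x.1, ![3, 3, 3, 0] x.2) = ![3, 3, 3, 0] (embVal p q x) := by
      decide +kernel
    exact h p q
  zero := by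
    have h : ∀ p q : Fin 4, embVal p q (0, 0) = 0 := by decide +kernel
    exact h p q
  one := by
    have h : ∀ p q : Fin 4, embVal p q (1, 3) = 3 := by decide +kernel
    exact h p q

/-- The assignments `(0, 0)` and `(a, b)` to `(x, y)` separate the points of `2 × dS`. -/
theorem embVal_separates : ∀ c d : Fin 2 × Fin 4,
    embVal 0 0 c = embVal 0 0 d → embVal 1 2 c = embVal 1 2 d → c = d := by
  decide +kernel

theorem statement14 (Γ : List (DSTerm ℕ × DSTerm ℕ)) (φ ψ : DSTerm ℕ) :
    DSAdmissible dSalg Γ φ ψ ↔ DSQValid (prodDS twoDS dSalg) Γ φ ψ := by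
  constructor
  · intro hadm v hv
    have heval : ∀ (w : ℕ → Fin 4) (t : DSTerm ℕ),
        (t.subst fun n => embTerm (v n)).eval dSalg w =
          embVal (w 0) (w 1) (t.eval (prodDS twoDS dSalg) v) := by
      intro w t
      have hv' : (fun n => (embTerm (v n)).eval dSalg w) =
          fun n => embVal (w 0) (w 1) (v n) :=
        funext fun n => eval_embTerm w (v n)
      exact (eval_subst dSalg _ w t).trans ((congrArg (fun u => t.eval dSalg u) hv').trans
        ((isDSHom_embVal (w 0) (w 1)).map_eval v t).symm)
    have hconcl := hadm (fun n => embTerm (v n)) fun p hp w =>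
      (heval w p.1).trans ((congrArg (embVal (w 0) (w 1)) (hv p hp)).trans (heval w p.2).symm)
    have hval : ∀ w : ℕ → Fin 4, embVal (w 0) (w 1) (φ.eval (prodDS twoDS dSalg) v) =
        embVal (w 0) (w 1) (ψ.eval (prodDS twoDS dSalg) v) := fun w =>
      (heval w φ).symm.trans ((hconcl w).trans (heval w ψ))
    exact embVal_separates _ _ (hval fun _ => 0) (hval fun n => if n = 0 then 1 else 2)
  · intro hval s hs w
    -- The first coordinate of `v` comes from an arbitrary evaluation in `2`, here the zero one.
    let v : ℕ → (prodDS twoDS dSalg).carrier :=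
      fun n => ((s n).eval twoDS (fun _ => twoDS.zero), (s n).eval dSalg w)
    have hfst : ∀ t : DSTerm ℕ, (t.eval (prodDS twoDS dSalg) v).1 =
        (t.subst s).eval twoDS (fun _ => twoDS.zero) := fun t => by
      rw [eval_subst]; exact (isDSHom_fst _ _).map_eval v t
    have hsnd : ∀ t : DSTerm ℕ, (t.eval (prodDS twoDS dSalg) v).2 =
        (t.subst s).eval dSalg w := fun t => by
      rw [eval_subst]; exact (isDSHom_snd _ _).map_eval v t
    have hprem : ∀ p ∈ Γ, p.1.eval (prodDS twoDS dSalg) v = p.2.eval (prodDS twoDS dSalg) v := by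
      intro p hp
      refine Prod.ext ?_ ?_
      · rw [hfst, hfst]
        apply twoIncl_injective
        rw [isDSHom_twoIncl.map_eval, isDSHom_twoIncl.map_eval]
        exact hs p hp _
      · rw [hsnd, hsnd]
        exact hs p hp w
    rw [← hsnd, ← hsnd, hval v hprem]
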